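/- Let k ≥ 1, let G be a finite simple 2-regular graph that is a disjoint union of 3k cycles of lengths s₁, …, s_{3k} (each s_i ≥ 3), let n = s₁ + ⋯ + s_{3k}, assume n/(4k) < s_i < n/(2k) for all i and that k divides n, let A be a set of n agents partitioned into k types each of size n/k, and let τ ∈ (1/2, 1). Then (in both the one-versus-all and the one-versus-one version of the swap Schelling game) there exists a bijective placement p : A → V(G) with placement cost 0 if and only if {1, …, 3k} can be partitioned into k disjoint triples, each triple's cycle lengths summing to n/k. -/

import Mathlib

open Finset
open scoped Classical

noncomputable section

namespace Schelling

variable {V A : Type*} [Fintype V] [Fintype A] {k : ℕ}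

/-- The set of neighbors of agent `a` under placement `p`. -/
def nbrs (G : SimpleGraph V) (p : A → V) (a : A) : Finset A :=
  Finset.univ.filter fun b => G.Adj (p a) (p b)

/-- `|N⁺_p(a)|`: the number of neighbors of `a` under `p` having the same type as `a`. -/
def posCount (G : SimpleGraph V) (t : A → Fin k) (p : A → V) (a : A) : ℕ :=
  (Finset.univ.filter fun b => G.Adj (p a) (p b) ∧ t b = t a).card

/-- One-versus-all `|N⁻_p(a)|`: the number of neighbors of `a` whose type differs from `t a`. -/
def negCountAll (G : SimpleGraph V) (t : A → Fin k) (p : A → V) (a : A) : ℕ :=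
  (Finset.univ.filter fun b => G.Adj (p a) (p b) ∧ t b ≠ t a).card

/-- One-versus-one `|N⁻_p(a)|`: the size of a largest set of neighbors of `a`
of one common type different from `t a`. -/
def negCountOne (G : SimpleGraph V) (t : A → Fin k) (p : A → V) (a : A) : ℕ :=
  (Finset.univ.filter fun T : Fin k => T ≠ t a).sup fun T =>
    (Finset.univ.filter fun b => G.Adj (p a) (p b) ∧ t b = T).card

/-- The cost of agent `a` in the one-versus-all version. -/
def costAll (G : SimpleGraph V) (t : A → Fin k) (τ : ℝ) (p : A → V) (a : A) : ℝ :=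
  if nbrs G p a = ∅ then τ
  else max 0 (τ - (posCount G t p a : ℝ) /
    ((posCount G t p a : ℝ) + (negCountAll G t p a : ℝ)))

/-- The cost of agent `a` in the one-versus-one version. -/
def costOne (G : SimpleGraph V) (t : A → Fin k) (τ : ℝ) (p : A → V) (a : A) : ℝ :=
  if nbrs G p a = ∅ then τ
  else max 0 (τ - (posCount G t p a : ℝ) /
    ((posCount G t p a : ℝ) + (negCountOne G t p a : ℝ)))

/-- A swap of the (distinct) agents `a` and `b` turning placement `p` into `q`,
which strictly decreases the cost of both agents (cost function `c`). -/
def SwapMove (c : (A → V) → A → ℝ) (p q : A → V) (a b : A) : Prop :=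
  a ≠ b ∧ q = p ∘ (Equiv.swap a b) ∧ c q a < c p a ∧ c q b < c p b

/-- `q` is obtained from `p` by an improving swap. -/
def ImprovingSwap (c : (A → V) → A → ℝ) (p q : A → V) : Prop :=
  ∃ a b, SwapMove c p q a b

/-- A placement is swap-stable if it admits no improving swap. -/
def SwapStable (c : (A → V) → A → ℝ) (p : A → V) : Prop :=
  ∀ q, ¬ ImprovingSwap c p q

/-- Some finite sequence of improving swaps starting at `p₀` ends in a swap-stable placement. -/
def ReachesStableSwap (c : (A → V) → A → ℝ) (p₀ : A → V) : Prop :=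
  ∃ (n : ℕ) (q : ℕ → A → V), q 0 = p₀ ∧
    (∀ i < n, ImprovingSwap c (q i) (q (i + 1))) ∧ SwapStable c (q n)

/-- A jump of agent `a` to the node `v` (unoccupied under `p`) turning placement `p`
into `q`, which strictly decreases the cost of `a` (cost function `c`). -/
def JumpMove (c : (A → V) → A → ℝ) (p q : A → V) (a : A) (v : V) : Prop :=
  (∀ b, p b ≠ v) ∧ q = Function.update p a v ∧ c q a < c p a

/-- `q` is obtained from `p` by an improving jump. -/
def ImprovingJump (c : (A → V) → A → ℝ) (p q : A → V) : Prop :=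
  ∃ a v, JumpMove c p q a v

/-- A placement is jump-stable if it admits no improving jump. -/
def JumpStable (c : (A → V) → A → ℝ) (p : A → V) : Prop :=
  ∀ q, ¬ ImprovingJump c p q

/-- Some finite sequence of improving jumps starting at `p₀` ends in a jump-stable placement. -/
def ReachesStableJump (c : (A → V) → A → ℝ) (p₀ : A → V) : Prop :=
  ∃ (n : ℕ) (q : ℕ → A → V), q 0 = p₀ ∧
    (∀ i < n, ImprovingJump c (q i) (q (i + 1))) ∧ JumpStable c (q n)

/-- The placement cost: the number of discontent agents (one-versus-all cost). -/
def placementCost (G : SimpleGraph V) (t : A → Fin k) (τ : ℝ) (p : A → V) : ℕ :=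
  (Finset.univ.filter fun a => costAll G t τ p a ≠ 0).card

/-- A graph is `Δ`-regular if every node has exactly `Δ` neighbors. -/
def IsRegular (G : SimpleGraph V) (Δ : ℕ) : Prop :=
  ∀ v : V, (Finset.univ.filter fun u => G.Adj v u).card = Δ

/-- The placement cost in the one-versus-one version: the number of discontent agents. -/
def placementCostOne (G : SimpleGraph V) (t : A → Fin k) (τ : ℝ) (p : A → V) : ℕ :=
  (Finset.univ.filter fun a => costOne G t τ p a ≠ 0).card

theorem cost_aux (τ : ℝ) (hτ : 1 / 2 < τ) (hτ1 : τ < 1) (P N : ℕ) (B : Prop)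
    (h1 : B → P = 2 ∧ N = 0) (h2 : ¬ B → P ≤ 1 ∧ 1 ≤ N) :
    max 0 (τ - (P : ℝ) / ((P : ℝ) + (N : ℝ))) = 0 ↔ B := by
  rw [max_eq_left_iff]
  constructor
  · intro h
    by_contra hB
    obtain ⟨hP, hN⟩ := h2 hB
    have hP' : (P : ℝ) ≤ 1 := by exact_mod_cast hP
    have hN' : (1 : ℝ) ≤ N := by exact_mod_cast hN
    have hP0 : (0 : ℝ) ≤ P := Nat.cast_nonneg P
    have : (P : ℝ) / ((P : ℝ) + (N : ℝ)) ≤ 1 / 2 := by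
      rw [div_le_div_iff₀ (by linarith) (by norm_num)]
      linarith
    linarith
  · intro hB
    obtain ⟨hP, hN⟩ := h1 hB
    subst hP; subst hN
    norm_num
    linarith

theorem nbrs_card (G : SimpleGraph V) (hreg : IsRegular G 2) (p : A → V)
    (hp : Function.Bijective p) (a : A) : (nbrs G p a).card = 2 := by
  rw [← hreg (p a)]
  unfold nbrs
  apply Finset.card_bij (fun b _ => p b)
  · intro b hb; simpa using hb
  · intro b _ c _ h; exact hp.1 h
  · intro v hv
    obtain ⟨b, rfl⟩ := hp.2 v
    exact ⟨b, by simpa using hv, rfl⟩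

theorem pos_add_neg (G : SimpleGraph V) (hreg : IsRegular G 2) (t : A → Fin k) (p : A → V)
    (hp : Function.Bijective p) (a : A) : posCount G t p a + negCountAll G t p a = 2 := by
  rw [← nbrs_card G hreg p hp a]
  unfold posCount negCountAll nbrs
  rw [← Finset.filter_filter, ← Finset.filter_filter]
  exact Finset.card_filter_add_card_filter_not _

theorem negAll_zero (G : SimpleGraph V) (t : A → Fin k) (p : A → V) (a : A) :
    negCountAll G t p a = 0 ↔ ∀ b, G.Adj (p a) (p b) → t b = t a := by
  unfold negCountAll
  rw [Finset.card_eq_zero, Finset.filter_eq_empty_iff]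
  simp

theorem negOne_zero (G : SimpleGraph V) (t : A → Fin k) (p : A → V) (a : A) :
    negCountOne G t p a = 0 ↔ ∀ b, G.Adj (p a) (p b) → t b = t a := by
  unfold negCountOne
  rw [← Nat.bot_eq_zero, Finset.sup_eq_bot_iff]
  constructor
  · intro h b hb
    by_contra hne
    have := h (t b) (by simpa using hne)
    rw [Nat.bot_eq_zero, Finset.card_eq_zero, Finset.filter_eq_empty_iff] at this
    exact this (Finset.mem_univ b) ⟨hb, rfl⟩
  · intro h T hT
    rw [Nat.bot_eq_zero, Finset.card_eq_zero, Finset.filter_eq_empty_iff]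
    rintro b _ ⟨hb, rfl⟩
    simp at hT
    exact hT (h b hb)

theorem costAll_iff (G : SimpleGraph V) (hreg : IsRegular G 2) (t : A → Fin k) (τ : ℝ)
    (hτ : 1 / 2 < τ) (hτ1 : τ < 1) (p : A → V) (hp : Function.Bijective p) (a : A) :
    costAll G t τ p a = 0 ↔ ∀ b, G.Adj (p a) (p b) → t b = t a := by
  have hc := nbrs_card G hreg p hp a
  have hne : nbrs G p a ≠ ∅ := by
    intro h; rw [h] at hc; simp at hc
  have h3 := pos_add_neg G hreg t p hp a
  have h4 := negAll_zero G t p a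
  unfold costAll
  rw [if_neg hne]
  apply cost_aux τ hτ hτ1
  · intro h; have := h4.2 h; omega
  · intro h; have := mt h4.1 h; omega

theorem costOne_iff (G : SimpleGraph V) (hreg : IsRegular G 2) (t : A → Fin k) (τ : ℝ)
    (hτ : 1 / 2 < τ) (hτ1 : τ < 1) (p : A → V) (hp : Function.Bijective p) (a : A) :
    costOne G t τ p a = 0 ↔ ∀ b, G.Adj (p a) (p b) → t b = t a := by
  have hc := nbrs_card G hreg p hp a
  have hne : nbrs G p a ≠ ∅ := by
    intro h; rw [h] at hc; simp at hc
  have h3 := pos_add_neg G hreg t p hp a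
  have h4 := negAll_zero G t p a
  have h5 := negOne_zero G t p a
  unfold costOne
  rw [if_neg hne]
  apply cost_aux τ hτ hτ1
  · intro h; have := h4.2 h; have := h5.2 h; omega
  · intro h; have := mt h4.1 h; have := mt h5.1 h; omega

theorem core {V A : Type*} [Fintype V] [Fintype A] (k : ℕ) (hk : 1 ≤ k)
    (G : SimpleGraph V)
    (s : Fin (3 * k) → ℕ)
    (comp : G.ConnectedComponent ≃ Fin (3 * k))
    (hsize : ∀ i,
      (Finset.univ.filter fun v => G.connectedComponentMk v = comp.symm i).card = s i)
    (n : ℕ)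
    (hlow : ∀ i, n < 4 * k * s i) (hhigh : ∀ i, 2 * k * s i < n)
    (hdvd : k ∣ n)
    (t : A → Fin k)
    (hsizes : ∀ j, (Finset.univ.filter fun a => t a = j).card = n / k) :
    (∃ p : A → V, Function.Bijective p ∧ ∀ a b, G.Adj (p a) (p b) → t b = t a) ↔
      (∃ f : Fin (3 * k) → Fin k,
        (∀ j, (Finset.univ.filter fun i => f i = j).card = 3) ∧
        (∀ j, ∑ i ∈ Finset.univ.filter (fun i => f i = j), s i = n / k)) := by
  have hcount : ∀ (f : Fin (3 * k) → Fin k) (j : Fin k),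
      ∑ i ∈ Finset.univ.filter (fun i => f i = j), s i =
        (Finset.univ.filter fun v => f (comp (G.connectedComponentMk v)) = j).card := by
    intro f j
    rw [Finset.card_eq_sum_card_fiberwise (f := fun v => comp (G.connectedComponentMk v))
      (t := Finset.univ.filter (fun i => f i = j)) (by intro v hv; simpa using hv)]
    apply Finset.sum_congr rfl
    intro i hi
    simp only [Finset.mem_filter, Finset.mem_univ, true_and] at hi
    rw [← hsize i]
    congr 1
    ext v
    simp only [Finset.mem_filter, Finset.mem_univ, true_and, Equiv.eq_symm_apply]
    constructor
    · intro h; rw [h]; exact ⟨hi, rfl⟩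
    · exact fun h => h.2
  constructor
  · rintro ⟨p, hp, hadj⟩
    let e := Equiv.ofBijective p hp
    have hstep : ∀ u v, G.Adj u v → t (e.symm v) = t (e.symm u) := by
      intro u v huv
      apply hadj
      have h1 : p (e.symm u) = u := e.apply_symm_apply u
      have h2 : p (e.symm v) = v := e.apply_symm_apply v
      rw [h1, h2]; exact huv
    have hreach : ∀ u v, G.Reachable u v → t (e.symm v) = t (e.symm u) := by
      rintro u v ⟨w⟩
      induction w with
      | nil => rfl
      | cons h _ ih => rw [ih, hstep _ _ h]
    let f : Fin (3 * k) → Fin k := fun i => t (e.symm (comp.symm i).out)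
    have hf : ∀ v, f (comp (G.connectedComponentMk v)) = t (e.symm v) := by
      intro v
      simp only [f, Equiv.symm_apply_apply]
      apply hreach
      apply SimpleGraph.ConnectedComponent.exact
      exact (Quot.out_eq (G.connectedComponentMk v)).symm
    have hsum : ∀ j, ∑ i ∈ Finset.univ.filter (fun i => f i = j), s i = n / k := by
      intro j
      rw [hcount, ← hsizes j]
      apply Finset.card_bij (fun v _ => e.symm v)
      · intro v hv
        rw [Finset.mem_filter] at hv
        rw [Finset.mem_filter, ← hf]; exact ⟨Finset.mem_univ _, hv.2⟩
      · intro u _ v _ h; exact e.symm.injective h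
      · intro a ha
        refine ⟨e a, ?_, e.symm_apply_apply a⟩
        rw [Finset.mem_filter] at ha
        rw [Finset.mem_filter, hf, e.symm_apply_apply]; exact ⟨Finset.mem_univ _, ha.2⟩
    refine ⟨f, ?_, hsum⟩
    intro j
    obtain ⟨m, rfl⟩ := hdvd
    have hm : k * m / k = m := Nat.mul_div_cancel_left m hk
    have hs := hsum j
    rw [hm] at hs
    have hl : ∀ i, m + 1 ≤ 4 * s i := by
      intro i
      have := hlow i
      have : k * m < k * (4 * s i) := by linarith
      exact Nat.lt_of_mul_lt_mul_left this
    have hh : ∀ i, 2 * s i + 1 ≤ m := by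
      intro i
      have := hhigh i
      have : k * (2 * s i) < k * m := by linarith
      exact Nat.lt_of_mul_lt_mul_left this
    have hm0 : 1 ≤ m := by
      have := hh ⟨0, by omega⟩
      omega
    set F := Finset.univ.filter (fun i => f i = j)
    have h1 : F.card * (m + 1) ≤ 4 * m := by
      rw [← hs, Finset.mul_sum, hs]
      rw [← smul_eq_mul]
      exact Finset.card_nsmul_le_sum _ _ _ (fun i _ => hl i)
    have h2 : 2 * m + F.card ≤ F.card * m := by
      have := Finset.sum_le_card_nsmul F (fun i => 2 * s i + 1) m (fun i _ => hh i)
      rw [Finset.sum_add_distrib, ← Finset.mul_sum, hs] at this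
      simpa using this
    have h3 : F.card < 4 := by
      by_contra h
      push Not at h
      nlinarith
    have h4 : 2 < F.card := by
      by_contra h
      push Not at h
      interval_cases F.card <;> omega
    omega
  · rintro ⟨f, -, hf⟩
    have hc : ∀ j : Fin k, Nonempty ({a // t a = j} ≃
        {v // f (comp (G.connectedComponentMk v)) = j}) := by
      intro j
      rw [← Fintype.card_eq, Fintype.card_subtype, Fintype.card_subtype, hsizes, ← hcount, hf]
    let E := Equiv.ofFiberEquiv (f := t) (g := fun v => f (comp (G.connectedComponentMk v)))
      (fun j => (hc j).some)
    have hE : ∀ a, f (comp (G.connectedComponentMk (E a))) = t a := fun a =>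
      Equiv.ofFiberEquiv_map (f := t) (g := fun v => f (comp (G.connectedComponentMk v))) _ a
    refine ⟨E, E.bijective, ?_⟩
    intro a b hab
    rw [← hE a, ← hE b, SimpleGraph.ConnectedComponent.sound hab.reachable]

/-- On a `2`-regular graph that is a disjoint union of `3k` cycles of lengths
`s 0, …, s (3k-1)` (each at least `3`) with `n/(4k) < s i < n/(2k)`, `k ∣ n = |V|`,
`k` agent types each of size `n/k` and `τ ∈ (1/2, 1)`: in both the one-versus-all and the
one-versus-one SSG, a bijective placement with placement cost `0` exists iff the cycles
can be partitioned into `k` triples whose lengths each sum to `n/k`. -/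
theorem statement15 {V A : Type*} [Fintype V] [Fintype A] (k : ℕ) (hk : 1 ≤ k)
    (G : SimpleGraph V) (hreg : IsRegular G 2)
    (s : Fin (3 * k) → ℕ) (hs : ∀ i, 3 ≤ s i)
    (comp : G.ConnectedComponent ≃ Fin (3 * k))
    (hsize : ∀ i,
      (Finset.univ.filter fun v => G.connectedComponentMk v = comp.symm i).card = s i)
    (n : ℕ) (hn : n = ∑ i, s i) (hV : Fintype.card V = n)
    (hlow : ∀ i, n < 4 * k * s i) (hhigh : ∀ i, 2 * k * s i < n)
    (hdvd : k ∣ n)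
    (t : A → Fin k) (hA : Fintype.card A = n)
    (hsizes : ∀ j, (Finset.univ.filter fun a => t a = j).card = n / k)
    (τ : ℝ) (hτ : 1 / 2 < τ) (hτ1 : τ < 1) :
    ((∃ p : A → V, Function.Bijective p ∧ placementCost G t τ p = 0) ↔
      (∃ f : Fin (3 * k) → Fin k,
        (∀ j, (Finset.univ.filter fun i => f i = j).card = 3) ∧
        (∀ j, ∑ i ∈ Finset.univ.filter (fun i => f i = j), s i = n / k))) ∧
    ((∃ p : A → V, Function.Bijective p ∧ placementCostOne G t τ p = 0) ↔
      (∃ f : Fin (3 * k) → Fin k,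
        (∀ j, (Finset.univ.filter fun i => f i = j).card = 3) ∧
        (∀ j, ∑ i ∈ Finset.univ.filter (fun i => f i = j), s i = n / k))) := by
  have hcore := core k hk G s comp hsize n hlow hhigh hdvd t hsizes
  constructor
  · rw [← hcore]
    apply exists_congr
    intro p
    apply and_congr_right
    intro hp
    unfold placementCost
    rw [Finset.card_eq_zero, Finset.filter_eq_empty_iff]
    simp only [Finset.mem_univ, forall_const, not_not, ne_eq,
      costAll_iff G hreg t τ hτ hτ1 p hp]
  · rw [← hcore]
    apply exists_congr
    intro p
    apply and_congr_right
    intro hp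
    unfold placementCostOne
    rw [Finset.card_eq_zero, Finset.filter_eq_empty_iff]
    simp only [Finset.mem_univ, forall_const, not_not, ne_eq,
      costOne_iff G hreg t τ hτ hτ1 p hp]

end Schelling
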